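/- arXiv:1506.06002 — 2 statements merged into one kernel-verified Lean document; each statement's English description precedes it below -/
import Mathlib

section
/- For each d ∈ {7,11}, the set Γ_s^(d) is a subgroup of U(2,1;J): it contains the identity matrix, and it is closed under matrix multiplication and under matrix inversion. -/
noncomputable section

open Matrix

/-- The Hermitian form matrix `J`. -/
def matJ : Matrix (Fin 3) (Fin 3) ℂ := !![0,0,1; 0,1,0; 1,0,0]

/-- Membership in `U(2,1;J)`. -/
def inU21 (M : Matrix (Fin 3) (Fin 3) ℂ) : Prop := IsUnit M ∧ Mᴴ * matJ * M = matJ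

/-- `i√d`. -/
def isqd (d : ℕ) : ℂ := Complex.I * (Real.sqrt d : ℂ)

/-- `ω_d = (1 + i√d)/2`. -/
def ωd (d : ℕ) : ℂ := (1 + Complex.I * (Real.sqrt d : ℂ)) / 2

/-- Membership in the ring of integers `O_d = ℤ + ℤ·ω_d` (for `d ≡ 3 mod 4`). -/
def inOd (d : ℕ) (z : ℂ) : Prop := ∃ a b : ℤ, z = (a : ℂ) + (b : ℂ) * ωd d

/-- The sister group `Γ_s^(d)`. -/
def GammaSd (d : ℕ) (M : Matrix (Fin 3) (Fin 3) ℂ) : Prop :=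
  inU21 M ∧ inOd d (M 0 0) ∧ inOd d (M 0 1) ∧ inOd d (M 1 1) ∧ inOd d (M 1 2) ∧
    inOd d (M 2 2) ∧ inOd d (isqd d * M 0 2) ∧ inOd d (M 1 0 / isqd d) ∧
    inOd d (M 2 0 / isqd d) ∧ inOd d (M 2 1 / isqd d)

/-!
Put `s = i√d` and `e = (0,0,-1; 1,0,0; 1,1,0)`. The integrality conditions on `M` say exactly that
`M i j ∈ s ^ e i j · O_d` for all `i`, `j`. Matrices with this property are closed under
multiplication because `s ∈ O_d` and `e i k ≤ e i j + e j k`. For `M ∈ U(2,1;J)` the inverse is the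
conjugate of `M` reflected in the antidiagonal; the exponents `e` are symmetric under this
reflection, and conjugation maps each `s ^ k · O_d` to itself.
-/

section PreservesForm

variable {n R : Type*} [Fintype n]

section Semiring

variable [Semiring R] [StarRing R]

/-- `M` preserves the sesquilinear form `(x, y) ↦ xᴴ H y`; `inU21 M` is
`IsUnit M ∧ PreservesForm matJ M`. -/
def PreservesForm (H M : Matrix n n R) : Prop := Mᴴ * H * M = H

theorem PreservesForm.one [DecidableEq n] (H : Matrix n n R) : PreservesForm H 1 := by
  rw [PreservesForm, conjTranspose_one, Matrix.one_mul, Matrix.mul_one]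

theorem PreservesForm.mul {H M N : Matrix n n R} (hM : PreservesForm H M)
    (hN : PreservesForm H N) : PreservesForm H (M * N) :=
  calc (M * N)ᴴ * H * (M * N)
    _ = Nᴴ * (Mᴴ * H * M) * N := by simp only [conjTranspose_mul, Matrix.mul_assoc]
    _ = H := by rw [hM, hN]

end Semiring

section CommRing

variable [DecidableEq n] [CommRing R] [StarRing R] {H M : Matrix n n R}

theorem PreservesForm.inv (hM : PreservesForm H M) (hu : IsUnit M) : PreservesForm H M⁻¹ := by
  have h_mul_inv : M * M⁻¹ = 1 := mul_nonsing_inv M ((isUnit_iff_isUnit_det M).mp hu)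
  calc M⁻¹ᴴ * H * M⁻¹
    _ = M⁻¹ᴴ * (Mᴴ * H * M) * M⁻¹ := by rw [hM]
    _ = (M * M⁻¹)ᴴ * H * (M * M⁻¹) := by simp only [conjTranspose_mul, Matrix.mul_assoc]
    _ = H := by rw [h_mul_inv, PreservesForm.one H]

theorem PreservesForm.inv_eq (hM : PreservesForm H M) (hH : H * H = 1) : M⁻¹ = H * Mᴴ * H :=
  inv_eq_left_inv <|
    calc H * Mᴴ * H * M
      _ = H * (Mᴴ * H * M) := by simp only [Matrix.mul_assoc]
      _ = 1 := by rw [hM, hH]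

end CommRing

end PreservesForm

theorem inU21.one : inU21 1 := ⟨isUnit_one, PreservesForm.one matJ⟩

theorem inU21.mul {M N : Matrix (Fin 3) (Fin 3) ℂ} (hM : inU21 M) (hN : inU21 N) :
    inU21 (M * N) :=
  ⟨hM.1.mul hN.1, PreservesForm.mul hM.2 hN.2⟩

theorem inU21.inv {M : Matrix (Fin 3) (Fin 3) ℂ} (hM : inU21 M) : inU21 M⁻¹ :=
  ⟨isUnit_nonsing_inv_iff.mpr hM.1, PreservesForm.inv hM.2 hM.1⟩

theorem matJ_eq_permMatrix : matJ = Fin.revPerm.permMatrix ℂ := by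
  ext i j
  fin_cases i <;> fin_cases j <;> simp [matJ, PEquiv.toMatrix_apply, Fin.rev]

theorem matJ_mul_mul_matJ (A : Matrix (Fin 3) (Fin 3) ℂ) :
    matJ * A * matJ = A.submatrix Fin.rev Fin.rev := by
  rw [matJ_eq_permMatrix, PEquiv.toMatrix_toPEquiv_mul, PEquiv.mul_toMatrix_toPEquiv]
  rfl

theorem matJ_mul_self : matJ * matJ = 1 := by
  simpa only [Matrix.mul_one, submatrix_one _ Fin.rev_injective] using matJ_mul_mul_matJ 1

theorem inU21.inv_apply {M : Matrix (Fin 3) (Fin 3) ℂ} (hM : inU21 M) (i j : Fin 3) :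
    M⁻¹ i j = star (M j.rev i.rev) := by
  rw [PreservesForm.inv_eq hM.2 matJ_mul_self, matJ_mul_mul_matJ, submatrix_apply,
    conjTranspose_apply]

theorem mul_apply_div_zpow_mem {n K : Type*} [Fintype n] [Semifield K] {O : Subsemiring K} {s : K}
    (hs : s ∈ O) (hs₀ : s ≠ 0) {e : Matrix n n ℤ} (he : ∀ i j k, e i k ≤ e i j + e j k)
    {M N : Matrix n n K} (hM : ∀ i j, M i j / s ^ e i j ∈ O) (hN : ∀ i j, N i j / s ^ e i j ∈ O)
    (i k : n) : (M * N) i k / s ^ e i k ∈ O := by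
  rw [Matrix.mul_apply, Finset.sum_div]
  refine sum_mem fun j _ ↦ ?_
  obtain ⟨m, hm⟩ := Int.le.dest (he i j k)
  have h_term : M i j * N j k / s ^ e i k = M i j / s ^ e i j * (N j k / s ^ e j k) * s ^ m := by
    have h_pow : s ^ e i k * s ^ m = s ^ e i j * s ^ e j k := by
      rw [← zpow_natCast s m, ← zpow_add₀ hs₀, ← zpow_add₀ hs₀, hm]
    rw [div_mul_div_comm, div_mul_eq_mul_div, ← h_pow,
      mul_div_mul_right _ _ (pow_ne_zero m hs₀)]
  rw [h_term]
  exact mul_mem (mul_mem (hM i j) (hN j k)) (pow_mem hs m)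

theorem isqd_sq (d : ℕ) : isqd d ^ 2 = -d := by
  rw [isqd, mul_pow, Complex.I_sq, ← Complex.ofReal_pow, Real.sq_sqrt d.cast_nonneg,
    Complex.ofReal_natCast, neg_one_mul]

theorem isqd_ne_zero {d : ℕ} (hd : d ≠ 0) : isqd d ≠ 0 := by
  refine ne_zero_pow two_ne_zero ?_
  rw [isqd_sq]
  exact neg_ne_zero.mpr (Nat.cast_ne_zero.mpr hd)

theorem star_isqd (d : ℕ) : star (isqd d) = -isqd d := by
  simp [isqd]

theorem ωd_eq (d : ℕ) : ωd d = (1 + isqd d) / 2 := rfl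

theorem ωd_sq (d : ℕ) : ωd d ^ 2 = ωd d - (d + 1) / 4 := by
  rw [ωd_eq]
  linear_combination isqd_sq d / 4

theorem star_ωd (d : ℕ) : star (ωd d) = 1 - ωd d := by
  have h_star : star (ωd d) = (1 + star (isqd d)) / 2 := by simp [ωd_eq]
  rw [h_star, star_isqd, ωd_eq]
  ring

theorem inOd.zero (d : ℕ) : inOd d 0 := ⟨0, 0, by simp⟩

theorem inOd.one (d : ℕ) : inOd d 1 := ⟨1, 0, by simp⟩

theorem inOd.neg {d : ℕ} {z : ℂ} (hz : inOd d z) : inOd d (-z) := by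
  obtain ⟨a, b, rfl⟩ := hz
  exact ⟨-a, -b, by push_cast; ring⟩

protected theorem inOd.star {d : ℕ} {z : ℂ} (hz : inOd d z) : inOd d (star z) := by
  obtain ⟨a, b, rfl⟩ := hz
  refine ⟨a + b, -b, ?_⟩
  rw [star_add, star_mul', star_ωd, star_intCast, star_intCast]
  push_cast
  ring

theorem inOd.star_div_zpow {d : ℕ} {z : ℂ} {k : ℤ} (hz : inOd d (z / isqd d ^ k)) :
    inOd d (star z / isqd d ^ k) := by
  have h_star := hz.star
  rw [star_div₀, star_zpow₀, star_isqd] at h_star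
  rcases k.even_or_odd with hk | hk
  · rwa [hk.neg_zpow] at h_star
  · rw [hk.neg_zpow, div_neg] at h_star
    simpa only [neg_neg] using h_star.neg

theorem inOd_isqd (d : ℕ) : inOd d (isqd d) :=
  ⟨-1, 2, by rw [ωd_eq]; push_cast; ring⟩

/-- `O_d` as a subring of `ℂ`; it is closed under multiplication because
`ω_d² = ω_d - (d + 1) / 4`. -/
def ringOd (d : ℕ) (hd : d % 4 = 3) : Subring ℂ where
  carrier := {z | inOd d z}
  zero_mem' := inOd.zero d
  one_mem' := inOd.one d
  add_mem' := by
    rintro _ _ ⟨a, b, rfl⟩ ⟨p, q, rfl⟩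
    exact ⟨a + p, b + q, by push_cast; ring⟩
  neg_mem' := inOd.neg
  mul_mem' := by
    rintro _ _ ⟨a, b, rfl⟩ ⟨p, q, rfl⟩
    obtain ⟨m, hm⟩ : 4 ∣ d + 1 := by lia
    have hm' : (d : ℂ) + 1 = 4 * m := by exact_mod_cast hm
    refine ⟨a * p - m * (b * q), a * q + b * p + b * q, ?_⟩
    push_cast
    linear_combination (b * q : ℂ) * ωd_sq d - (b * q / 4 : ℂ) * hm'

/-- The exponents `e` for which `Γ_s^(d)` consists of the `M ∈ U(2,1;J)` with
`M i j ∈ (i√d) ^ e i j · O_d` for all `i`, `j`. -/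
def sisterExponent : Matrix (Fin 3) (Fin 3) ℤ := !![0, 0, -1; 1, 0, 0; 1, 1, 0]

theorem sisterExponent_triangle (i j k : Fin 3) :
    sisterExponent i k ≤ sisterExponent i j + sisterExponent j k := by
  decide +revert

theorem sisterExponent_self (i : Fin 3) : sisterExponent i i = 0 := by
  decide +revert

theorem sisterExponent_rev_rev (i j : Fin 3) :
    sisterExponent j.rev i.rev = sisterExponent i j := by
  fin_cases i <;> fin_cases j <;> rfl

theorem gammaSd_iff {d : ℕ} {M : Matrix (Fin 3) (Fin 3) ℂ} :
    GammaSd d M ↔ inU21 M ∧ ∀ i j, inOd d (M i j / isqd d ^ sisterExponent i j) := by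
  simp only [GammaSd, sisterExponent, Fin.forall_fin_succ, IsEmpty.forall_iff, and_true,
    Fin.succ_zero_eq_one, Fin.succ_one_eq_two, of_apply, cons_val', cons_val_fin_one,
    cons_val_zero, cons_val_succ, pow_zero, pow_one, zpow_ofNat, _root_.zpow_neg, inv_one, inv_inv,
    div_eq_mul_inv, mul_one, mul_comm (isqd d), Int.reduceNeg, Fin.isValue]
  tauto

theorem GammaSd.one (d : ℕ) : GammaSd d 1 := by
  refine gammaSd_iff.mpr ⟨inU21.one, fun i j ↦ ?_⟩
  obtain rfl | hij := eq_or_ne i j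
  · simpa only [one_apply_eq, sisterExponent_self, zpow_zero, div_one] using inOd.one d
  · simpa only [one_apply_ne hij, zero_div] using inOd.zero d

theorem GammaSd.inv {d : ℕ} {M : Matrix (Fin 3) (Fin 3) ℂ} (hM : GammaSd d M) :
    GammaSd d M⁻¹ := by
  obtain ⟨hU, hO⟩ := gammaSd_iff.mp hM
  refine gammaSd_iff.mpr ⟨hU.inv, fun i j ↦ ?_⟩
  rw [hU.inv_apply, ← sisterExponent_rev_rev]
  exact (hO j.rev i.rev).star_div_zpow

theorem GammaSd.mul {d : ℕ} (hd : d % 4 = 3) {M N : Matrix (Fin 3) (Fin 3) ℂ}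
    (hM : GammaSd d M) (hN : GammaSd d N) : GammaSd d (M * N) := by
  obtain ⟨hMU, hMO⟩ := gammaSd_iff.mp hM
  obtain ⟨hNU, hNO⟩ := gammaSd_iff.mp hN
  have hs₀ : isqd d ≠ 0 := isqd_ne_zero (by lia)
  exact gammaSd_iff.mpr ⟨hMU.mul hNU, mul_apply_div_zpow_mem (O := (ringOd d hd).toSubsemiring)
    (inOd_isqd d) hs₀ sisterExponent_triangle hMO hNO⟩

theorem gammaSd_subgroup_general {d : ℕ} (hd : d % 4 = 3) :
    GammaSd d 1 ∧
    (∀ M N : Matrix (Fin 3) (Fin 3) ℂ, GammaSd d M → GammaSd d N → GammaSd d (M * N)) ∧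
    (∀ M : Matrix (Fin 3) (Fin 3) ℂ, GammaSd d M → GammaSd d M⁻¹) :=
  ⟨GammaSd.one d, fun _ _ hM hN ↦ hM.mul hd hN, fun _ hM ↦ hM.inv⟩

/-- For `d ∈ {7,11}`, `Γ_s^(d)` is a subgroup of `U(2,1;J)`: it contains the identity
and is closed under matrix multiplication and matrix inversion. -/
theorem gammaSd_subgroup :
    ∀ d ∈ ({7, 11} : Set ℕ),
      GammaSd d 1 ∧
      (∀ M N : Matrix (Fin 3) (Fin 3) ℂ, GammaSd d M → GammaSd d N → GammaSd d (M * N)) ∧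
      (∀ M : Matrix (Fin 3) (Fin 3) ℂ, GammaSd d M → GammaSd d M⁻¹) := by
  rintro d (rfl | rfl) <;> exact gammaSd_subgroup_general (by norm_num)
end
end

section
/- Every M ∈ Γ_s^(2) with M₂₁ = M₃₁ = 0 can be written as ε·W, where ε ∈ {1,−1} and W is a finite product of the matrices R₁ = [[1,0,0],[0,−1,0],[0,0,1]], R₂ = [[1,2,−2],[0,−1,2],[0,0,1]], R₃ = [[1,−i√2,−1],[0,−1,i√2],[0,0,1]], T = [[1,0,i/√2],[0,1,0],[0,0,1]] and their inverses. In other words, the stabilizer of q_∞ in Γ_s^(2) is generated, modulo ±I, by R₁, R₂, R₃ and T. -/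
noncomputable section

open Matrix

/-- `i√2`. -/
def isq2 : ℂ := Complex.I * (Real.sqrt 2 : ℂ)

/-- Membership in the ring of integers `O₂ = ℤ + ℤ·i√2`. -/
def inO2 (z : ℂ) : Prop := ∃ a b : ℤ, z = (a : ℂ) + (b : ℂ) * isq2

/-- The sister group `Γ_s^(2)`. -/
def GammaS2 (M : Matrix (Fin 3) (Fin 3) ℂ) : Prop :=
  inU21 M ∧ inO2 (M 0 0) ∧ inO2 (M 0 1) ∧ inO2 (M 1 1) ∧ inO2 (M 1 2) ∧
    inO2 (M 2 2) ∧ inO2 (isq2 * M 0 2) ∧ inO2 (M 1 0 / isq2) ∧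
    inO2 (M 2 0 / isq2) ∧ inO2 (M 2 1 / isq2)

def R₁ : Matrix (Fin 3) (Fin 3) ℂ := !![1,0,0; 0,-1,0; 0,0,1]

def R₂ : Matrix (Fin 3) (Fin 3) ℂ := !![1,2,-2; 0,-1,2; 0,0,1]

def R₃ : Matrix (Fin 3) (Fin 3) ℂ :=
  !![1, -(Complex.I * (Real.sqrt 2 : ℂ)), -1;
     0, -1, Complex.I * (Real.sqrt 2 : ℂ);
     0, 0, 1]

def T : Matrix (Fin 3) (Fin 3) ℂ :=
  !![1, 0, Complex.I / (Real.sqrt 2 : ℂ); 0, 1, 0; 0, 0, 1]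

/-!
A unitary matrix fixing `q_∞` is upper triangular, hence a diagonal matrix times a Heisenberg
translation by some `(z, t) ∈ ℂ × ℝ`. Integrality makes the diagonal entries units of `O₂`, that is
signs, and forces `t ∈ ℤ√2` and `|z|² ∈ 2ℤ`; for `z = p + q·i√2` the latter says that `p` is even.
These lattice translations are generated by `T` and the products of two reflections `R₂R₁`, `R₃R₁`,
which translate by `2` and `i√2`; up to `±1` the diagonal part is the identity or `R₁`.
-/

theorem isq2_re : isq2.re = 0 := by simp [isq2]

theorem isq2_im : isq2.im = √2 := by simp [isq2]

theorem isq2_mul_self : isq2 * isq2 = -2 := by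
  apply Complex.ext <;> simp [isq2_re, isq2_im]

theorem normSq_intCast_add_intCast_mul_isq2 (p q : ℤ) :
    Complex.normSq (p + q * isq2) = p ^ 2 + 2 * q ^ 2 := by
  have h2 : √2 ^ 2 = 2 := Real.sq_sqrt zero_le_two
  simp only [Complex.normSq_apply, Complex.add_re, Complex.add_im, Complex.mul_re, Complex.mul_im,
    Complex.intCast_re, Complex.intCast_im, isq2_re, isq2_im]
  linear_combination (q : ℝ) ^ 2 * h2

theorem inO2.mul {z w : ℂ} (hz : inO2 z) (hw : inO2 w) : inO2 (z * w) := by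
  obtain ⟨p, q, rfl⟩ := hz
  obtain ⟨r, s, rfl⟩ := hw
  refine ⟨p * r - 2 * q * s, p * s + q * r, ?_⟩
  push_cast
  linear_combination (q * s : ℂ) * isq2_mul_self

theorem inO2.eq_one_or_eq_neg_one_of_normSq_mul {z w : ℂ} (hz : inO2 z) (hw : inO2 w)
    (hzw : Complex.normSq z * Complex.normSq w = 1) : z = 1 ∨ z = -1 := by
  obtain ⟨p, q, rfl⟩ := hz
  obtain ⟨r, s, rfl⟩ := hw
  simp only [normSq_intCast_add_intCast_mul_isq2] at hzw
  have norm_mul : (p ^ 2 + 2 * q ^ 2) * (r ^ 2 + 2 * s ^ 2) = 1 := by exact_mod_cast hzw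
  have norm_eq : p ^ 2 + 2 * q ^ 2 = 1 :=
    Int.eq_one_of_mul_eq_one_right (by positivity) norm_mul
  have hq : q = 0 := by
    rw [← sq_eq_zero_iff]
    have := sq_nonneg p
    have := sq_nonneg q
    lia
  have hp : p = 1 ∨ p = -1 := sq_eq_one_iff.mp (by simpa [hq] using norm_eq)
  rcases hp with rfl | rfl <;> simp [hq]

/-- The Heisenberg translation with horizontal part `z` and vertical part `t`. These matrices form
the unipotent radical of the stabilizer of `q_∞` in `U(2,1;J)`; their coordinates are normalized
so that `T` is `heisenberg 0 √2`. -/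
def heisenberg (z : ℂ) (t : ℝ) : Matrix (Fin 3) (Fin 3) ℂ :=
  !![1, -star z, (-Complex.normSq z + t * Complex.I) / 2;
     0, 1, z;
     0, 0, 1]

theorem heisenberg_zero : heisenberg 0 0 = 1 := by
  ext i j
  fin_cases i <;> fin_cases j <;> simp [heisenberg]

theorem heisenberg_mul (z w : ℂ) (s t : ℝ) :
    heisenberg z s * heisenberg w t = heisenberg (z + w) (s + t - 2 * (star z * w).im) := by
  ext i j
  fin_cases i <;> fin_cases j <;>
    simp only [heisenberg, Matrix.mul_apply, Fin.sum_univ_three]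
  all_goals apply Complex.ext <;> simp [Complex.normSq_apply] <;> ring

theorem heisenberg_add_mul (a b : ℝ) (z : ℂ) (t : ℝ) :
    heisenberg ((a + b) * z) ((a + b) * t) =
      heisenberg (a * z) (a * t) * heisenberg (b * z) (b * t) := by
  rw [heisenberg_mul, add_mul, add_mul]
  congr 1
  simp only [star_mul', Complex.star_def, Complex.conj_ofReal, Complex.mul_re, Complex.mul_im,
    Complex.ofReal_re, Complex.ofReal_im, Complex.conj_re, Complex.conj_im]
  ring

theorem heisenberg_intCast_mul_mem {S : Submonoid (Matrix (Fin 3) (Fin 3) ℂ)} {z : ℂ} {t : ℝ}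
    (hpos : heisenberg z t ∈ S) (hneg : heisenberg (-z) (-t) ∈ S) (n : ℤ) :
    heisenberg (n * z) (n * t) ∈ S := by
  induction n using Int.induction_on with
  | zero => simp [heisenberg_zero]
  | succ n ih =>
    have h := heisenberg_add_mul n 1 z t
    push_cast [one_mul] at h ih ⊢
    exact h ▸ mul_mem ih hpos
  | pred n ih =>
    have h := heisenberg_add_mul (-n) (-1) z t
    push_cast [neg_one_mul, ← sub_eq_add_neg] at h ih ⊢
    exact h ▸ mul_mem ih hneg

theorem inU21.form_columns {M : Matrix (Fin 3) (Fin 3) ℂ} (hM : inU21 M) (i j : Fin 3) :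
    star (M 2 i) * M 0 j + star (M 1 i) * M 1 j + star (M 0 i) * M 2 j = matJ i j := by
  rw [← hM.2]
  simp [matJ, Matrix.mul_apply, Fin.sum_univ_three]

theorem inU21.two_mul_re_star_mul {M : Matrix (Fin 3) (Fin 3) ℂ} (hM : inU21 M) :
    2 * (star (M 2 2) * M 0 2).re = -Complex.normSq (M 1 2) := by
  have h : (star (M 2 2) * M 0 2 + star (M 1 2) * M 1 2 + star (M 0 2) * M 2 2).re = 0 := by
    rw [hM.form_columns 2 2]
    simp [matJ]
  simp only [Complex.normSq_apply, Complex.star_def, Complex.add_re, Complex.mul_re,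
    Complex.conj_re, Complex.conj_im] at h ⊢
  linarith

section Stabilizer

variable {M : Matrix (Fin 3) (Fin 3) ℂ} (hM : inU21 M) (h21 : M 1 0 = 0) (h31 : M 2 0 = 0)
include hM h21 h31

theorem inU21.star_apply_zero_zero_mul : star (M 0 0) * M 2 2 = 1 := by
  simpa [matJ, h21, h31] using hM.form_columns 0 2

theorem inU21.apply_two_one : M 2 1 = 0 := by
  have h : star (M 0 0) * M 2 1 = 0 := by simpa [matJ, h21, h31] using hM.form_columns 0 1
  exact (mul_eq_zero.mp h).resolve_left
    (left_ne_zero_of_mul_eq_one (hM.star_apply_zero_zero_mul h21 h31))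

theorem inU21.star_apply_one_one_mul : star (M 1 1) * M 1 1 = 1 := by
  simpa [matJ, hM.apply_two_one h21 h31] using hM.form_columns 1 1

theorem inU21.exists_eq_diagonal_mul_heisenberg :
    ∃ z t, M = diagonal ![M 0 0, M 1 1, M 2 2] * heisenberg z t := by
  have hag := hM.star_apply_zero_zero_mul h21 h31
  have hga : M 0 0 * star (M 2 2) = 1 := by simpa [mul_comm] using congrArg star hag
  have hdd := hM.star_apply_one_one_mul h21 h31
  have col12 : M 1 1 * star (M 1 2) + M 0 1 * star (M 2 2) = 0 := by
    simpa [matJ, hM.apply_two_one h21 h31, mul_comm] using congrArg star (hM.form_columns 1 2)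
  have hd : Complex.normSq (M 1 1) = 1 := by
    simpa using congrArg Complex.re (Complex.normSq_eq_conj_mul_self.trans hdd)
  have corner : (-Complex.normSq (star (M 1 1) * M 1 2) +
      (2 * (star (M 2 2) * M 0 2).im : ℝ) * Complex.I) / 2 = star (M 2 2) * M 0 2 := by
    have hnorm : Complex.normSq (star (M 1 1) * M 1 2) = -2 * (star (M 2 2) * M 0 2).re := by
      rw [map_mul, Complex.star_def, Complex.normSq_conj, hd, ← Complex.star_def]
      linarith [hM.two_mul_re_star_mul]
    rw [hnorm]
    push_cast
    linear_combination Complex.re_add_im (star (M 2 2) * M 0 2)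
  have entry01 : M 0 0 * (M 1 1 * star (M 1 2)) = -M 0 1 := by
    linear_combination M 0 0 * col12 - M 0 1 * hga
  have entry02 : M 0 0 * (star (M 2 2) * M 0 2) = M 0 2 := by
    rw [← mul_assoc, hga, one_mul]
  have entry12 : M 1 1 * (star (M 1 1) * M 1 2) = M 1 2 := by
    rw [← mul_assoc, mul_comm (M 1 1), hdd, one_mul]
  refine ⟨star (M 1 1) * M 1 2, 2 * (star (M 2 2) * M 0 2).im, ?_⟩
  rw [heisenberg, corner]
  ext i j
  fin_cases i <;> fin_cases j <;>
    simp [h21, h31, hM.apply_two_one h21 h31, entry01, entry02, entry12,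
      -RCLike.star_def, -Complex.star_def]

end Stabilizer

theorem exists_int_coordinates_of_inO2 {z : ℂ} {t : ℝ} (hz : inO2 z)
    (hc : inO2 (isq2 * ((-Complex.normSq z + t * Complex.I) / 2))) :
    ∃ m q k : ℤ, z = m * 2 + q * isq2 ∧ t = k * √2 := by
  obtain ⟨p, q, rfl⟩ := hz
  obtain ⟨x, y, hxy⟩ := hc
  rw [normSq_intCast_add_intCast_mul_isq2] at hxy
  have hre := congrArg Complex.re hxy
  have him := congrArg Complex.im hxy
  simp only [Complex.mul_re, Complex.mul_im, Complex.add_re, Complex.add_im, Complex.neg_re,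
    Complex.neg_im, Complex.div_ofNat_re, Complex.div_ofNat_im, Complex.ofReal_re,
    Complex.ofReal_im, Complex.I_re, Complex.I_im, Complex.intCast_re, Complex.intCast_im,
    isq2_re, isq2_im] at hre him
  have h2 : √2 * √2 = 2 := Real.mul_self_sqrt zero_le_two
  have ht : t = (-x : ℤ) * √2 := by
    push_cast
    linear_combination -√2 * hre - t / 2 * h2
  have hnorm : p ^ 2 + 2 * q ^ 2 = -2 * y := by
    have : (p ^ 2 + 2 * q ^ 2 : ℝ) = -2 * y := by
      apply mul_right_cancel₀ (Real.sqrt_ne_zero'.mpr zero_lt_two)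
      linear_combination -2 * him
    exact_mod_cast this
  have hp : Even p := by
    have hp_sq : Even (p ^ 2) := ⟨-y - q ^ 2, by lia⟩
    exact (Int.even_pow.mp hp_sq).1
  obtain ⟨m, rfl⟩ := hp
  exact ⟨m, q, -x, by push_cast; ring, ht⟩

/-- The reflections `R₁`, `R₂`, `R₃`, the vertical translation `T`, and their inverses. -/
def generators : Set (Matrix (Fin 3) (Fin 3) ℂ) :=
  {R₁, R₂, R₃, T, R₁⁻¹, R₂⁻¹, R₃⁻¹, T⁻¹}

theorem R₁_mul_self : R₁ * R₁ = 1 := by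
  ext i j
  fin_cases i <;> fin_cases j <;> simp [R₁, Matrix.mul_apply, Fin.sum_univ_three]

theorem R₁_mul_heisenberg (z : ℂ) (t : ℝ) : R₁ * heisenberg z t = heisenberg (-z) t * R₁ := by
  ext i j
  fin_cases i <;> fin_cases j <;> simp [R₁, heisenberg, Matrix.mul_apply, Fin.sum_univ_three]

theorem R₂_eq_heisenberg_mul_R₁ : R₂ = heisenberg 2 0 * R₁ := by
  ext i j
  fin_cases i <;> fin_cases j <;>
    simp [heisenberg, R₁, R₂, Matrix.mul_apply, Fin.sum_univ_three]
  norm_num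

theorem R₃_eq_heisenberg_mul_R₁ : R₃ = heisenberg isq2 0 * R₁ := by
  ext i j
  fin_cases i <;> fin_cases j <;>
    simp [heisenberg, isq2, R₁, R₃, Matrix.mul_apply, Fin.sum_univ_three]

theorem T_eq_heisenberg : T = heisenberg 0 √2 := by
  have h : Complex.I / (√2 : ℂ) = √2 * Complex.I / 2 := by
    have h2 : (√2 : ℂ) ^ 2 = 2 := by exact_mod_cast Real.sq_sqrt zero_le_two
    field_simp
    exact h2.symm
  simp [T, heisenberg, h]

theorem T_inv_eq_heisenberg : T⁻¹ = heisenberg 0 (-√2) := by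
  apply Matrix.inv_eq_right_inv
  rw [T_eq_heisenberg, heisenberg_mul]
  simp [heisenberg_zero]

theorem heisenberg_intCast_mul_mem_of_mul_R₁_mem {S : Submonoid (Matrix (Fin 3) (Fin 3) ℂ)}
    {z : ℂ} (hR₁ : R₁ ∈ S) (hR : heisenberg z 0 * R₁ ∈ S) (n : ℤ) :
    heisenberg (n * z) 0 ∈ S := by
  have hpos : heisenberg z 0 ∈ S := by
    simpa [mul_assoc, R₁_mul_self] using mul_mem hR hR₁
  have hneg : heisenberg (-z) 0 ∈ S := by
    simpa [← mul_assoc, R₁_mul_heisenberg, mul_assoc (heisenberg (-z) 0), R₁_mul_self]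
      using mul_mem hR₁ hR
  simpa using heisenberg_intCast_mul_mem hpos (by simpa using hneg) n

theorem heisenberg_mem_closure_generators (m q k : ℤ) :
    heisenberg (m * 2 + q * isq2) (k * √2) ∈ Submonoid.closure generators := by
  have mem (A) (hA : A ∈ generators) : A ∈ Submonoid.closure generators :=
    Submonoid.subset_closure hA
  have hR₁ := mem R₁ (by simp [generators])
  have hm := heisenberg_intCast_mul_mem_of_mul_R₁_mem hR₁
    (R₂_eq_heisenberg_mul_R₁ ▸ mem R₂ (by simp [generators])) m
  have hq := heisenberg_intCast_mul_mem_of_mul_R₁_mem hR₁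
    (R₃_eq_heisenberg_mul_R₁ ▸ mem R₃ (by simp [generators])) q
  -- `4 * m * q` cancels the cocycle of `heisenberg_mul` for the translations by `2 * m` and
  -- `q * isq2`.
  have hk := heisenberg_intCast_mul_mem (T_eq_heisenberg ▸ mem T (by simp [generators]))
    (by simpa [T_inv_eq_heisenberg] using mem T⁻¹ (by simp [generators])) (k + 4 * m * q)
  have h := mul_mem (mul_mem hm hq) hk
  rw [heisenberg_mul, heisenberg_mul] at h
  convert h using 2
  · ring
  · simp only [star_add, star_mul', star_intCast, star_ofNat, mul_zero, Complex.zero_im,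
      Complex.mul_re, Complex.mul_im, Complex.intCast_re, Complex.intCast_im, Complex.re_ofNat,
      Complex.im_ofNat, isq2_re, isq2_im, Int.cast_add, Int.cast_mul, Int.cast_ofNat]
    ring

theorem exists_mem_closure_diagonal_eq_smul {a d : ℂ} (ha : a = 1 ∨ a = -1) (hd : d = 1 ∨ d = -1) :
    ∃ A ∈ Submonoid.closure generators, diagonal ![a, d, a] = a • A := by
  have hR₁ : R₁ ∈ Submonoid.closure generators :=
    Submonoid.subset_closure (by simp [generators])
  by_cases had : d = a
  · refine ⟨1, one_mem _, ?_⟩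
    ext i j
    fin_cases i <;> fin_cases j <;> simp [had]
  · refine ⟨R₁, hR₁, ?_⟩
    have hda : d = -a := by rcases ha with rfl | rfl <;> rcases hd with rfl | rfl <;> simp_all
    ext i j
    fin_cases i <;> fin_cases j <;> simp [hda, R₁]

theorem GammaS2.diagonal_signs {M : Matrix (Fin 3) (Fin 3) ℂ} (hM : GammaS2 M) (h21 : M 1 0 = 0)
    (h31 : M 2 0 = 0) :
    (M 0 0 = 1 ∨ M 0 0 = -1) ∧ (M 1 1 = 1 ∨ M 1 1 = -1) ∧ M 2 2 = M 0 0 := by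
  obtain ⟨hU, ha, -, hd, -, hg, -⟩ := hM
  have hag := hU.star_apply_zero_zero_mul h21 h31
  have hdd := hU.star_apply_one_one_mul h21 h31
  have ha1 := ha.eq_one_or_eq_neg_one_of_normSq_mul hg (by simpa using congrArg Complex.normSq hag)
  have hd1 := hd.eq_one_or_eq_neg_one_of_normSq_mul hd (by simpa using congrArg Complex.normSq hdd)
  refine ⟨ha1, hd1, ?_⟩
  rcases ha1 with h | h
  · simpa [h] using hag
  · simpa [h, neg_eq_iff_eq_neg] using hag

theorem GammaS2.exists_eq_diagonal_mul_integral_heisenberg {M : Matrix (Fin 3) (Fin 3) ℂ}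
    (hM : GammaS2 M) (h21 : M 1 0 = 0) (h31 : M 2 0 = 0) :
    ∃ m q k : ℤ, M = diagonal ![M 0 0, M 1 1, M 0 0] *
      heisenberg (m * 2 + q * isq2) (k * √2) := by
  obtain ⟨ha, hd, hg⟩ := hM.diagonal_signs h21 h31
  obtain ⟨hU, ha2, -, hd2, he, -, hc, -⟩ := hM
  obtain ⟨z, t, hzt⟩ := hU.exists_eq_diagonal_mul_heisenberg h21 h31
  rw [hg] at hzt
  have hz : inO2 z := by
    have h : M 1 2 = M 1 1 * z := by simpa [heisenberg] using congrFun₂ hzt 1 2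
    have hdd : M 1 1 * M 1 1 = 1 := mul_self_eq_one_iff.mpr hd
    have := hd2.mul he
    rwa [h, ← mul_assoc, hdd, one_mul] at this
  have hcorner : inO2 (isq2 * ((-Complex.normSq z + t * Complex.I) / 2)) := by
    have h : M 0 2 = M 0 0 * ((-Complex.normSq z + t * Complex.I) / 2) := by
      simpa [heisenberg] using congrFun₂ hzt 0 2
    have haa : M 0 0 * M 0 0 = 1 := mul_self_eq_one_iff.mpr ha
    have := ha2.mul hc
    rwa [h, mul_left_comm, ← mul_assoc (M 0 0), haa, one_mul] at this
  obtain ⟨m, q, k, rfl, rfl⟩ := exists_int_coordinates_of_inO2 hz hcorner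
  exact ⟨m, q, k, hzt⟩

/-- The stabilizer of `q_∞` in `Γ_s^(2)` is generated, modulo `±I`, by `R₁, R₂, R₃, T`. -/
theorem gammaS2_stabilizer_generated (M : Matrix (Fin 3) (Fin 3) ℂ) (hM : GammaS2 M)
    (h21 : M 1 0 = 0) (h31 : M 2 0 = 0) :
    ∃ (ε : ℂ) (L : List (Matrix (Fin 3) (Fin 3) ℂ)),
      (ε = 1 ∨ ε = -1) ∧
      (∀ A ∈ L, A ∈ ({R₁, R₂, R₃, T, R₁⁻¹, R₂⁻¹, R₃⁻¹, T⁻¹} :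
        Set (Matrix (Fin 3) (Fin 3) ℂ))) ∧
      M = ε • L.prod := by
  obtain ⟨ha, hd, -⟩ := hM.diagonal_signs h21 h31
  obtain ⟨m, q, k, hMN⟩ := hM.exists_eq_diagonal_mul_integral_heisenberg h21 h31
  obtain ⟨A, hA, hdiag⟩ := exists_mem_closure_diagonal_eq_smul ha hd
  obtain ⟨L, hL, hprod⟩ := Submonoid.exists_list_of_mem_closure
    (mul_mem hA (heisenberg_mem_closure_generators m q k))
  refine ⟨M 0 0, L, ha, hL, ?_⟩
  rw [hprod, ← Matrix.smul_mul, ← hdiag]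
  exact hMN
end
end
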